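/- Let α₀ > 0, β₀ > 0 and λ > 0. Then the set S_λ = { (f,g) ∈ H¹(ℝ)×H¹(ℝ) : I(f,g) = M_λ and ∫_ℝ f² g dx = λ } is non-empty; that is, there exists a pair (φ,ψ) ∈ H¹(ℝ)×H¹(ℝ) with ∫_ℝ φ² ψ dx = λ and I(φ,ψ) = M_λ. -/

import Mathlib

/-!
Write `α₀ = a²`, `β₀ = b²` with `a, b > 0`. The map `f ↦ u = f' + a f` is an isometry from `H¹`, with
norm `(∫ f'² + a² f²)^{1/2}`, onto `L²`: the cross term `2 a f f'` integrates to zero. Its inverse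
`op a` has the kernel `1_{t ≤ x} exp (-a (x - t))`. In the variables `u = f' + a f`, `v = g' + b g` the
functional `I` is `‖u‖² + ‖v‖²`, and the constraint is `Jf a b u v = lam` for a cubic form `Jf`.

By homogeneity, `M ≤ I` under the constraint is the same as `M³ J² ≤ lam² I³` without constraint
(`class_bound`), and this extends to all of `L² × L²` by density (`L2_bound`). Each member of a
minimizing sequence is translated so that `|g_n 0|` stays bounded below (`exists_translate`), and a
weakly convergent subsequence is taken (`weak_compact`). As `op a u x` is an inner product with a fixed
element of `L²`, weak convergence gives pointwise convergence of `f_n` and `g_n`, hence the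
Brezis–Lieb splitting of `Jf` (`brezis_lieb_L2`). The weak limit is nonzero, and applying `L2_bound`
both to the limit and to the remainder leaves no room for a loss of mass, because `θ ↦ θ^{3/2}` is
strictly superadditive (`splitting_arith`). So the limit is a minimizer over `L² × L²`
(`exists_L2_minimizer`).

The predicate `InH1` asks for differentiability at every point, which a general element of `H¹` lacks.
The first variation of `M³ J² ≤ lam² I³` (`first_order`) gives the weak Euler–Lagrange equations
`-f'' + a² f = c f g`, `-g'' + b² g = c' f²`; testing them with the kernel yields the Green function
representation, so that weak solutions are classical (`regularity`).
-/

open MeasureTheory Filter Topology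

noncomputable section

/-- Membership in `H¹(ℝ)`: `f` is differentiable with `f` and `f'` square-integrable. -/
def InH1 (f : ℝ → ℝ) : Prop :=
  Differentiable ℝ f ∧ Integrable (fun x => f x ^ 2) ∧ Integrable (fun x => deriv f x ^ 2)

/-- The functional `I(f,g) = ∫ (f'² + g'² + α₀ f² + β₀ g²)`. -/
def Ifun (α₀ β₀ : ℝ) (f g : ℝ → ℝ) : ℝ :=
  ∫ x : ℝ, (deriv f x ^ 2 + deriv g x ^ 2 + α₀ * f x ^ 2 + β₀ * g x ^ 2)

/-- The set of values `I(f,g)` over pairs in `H¹ × H¹` with `∫ f² g = lam`. -/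
def IvalSet (α₀ β₀ lam : ℝ) : Set ℝ :=
  {m | ∃ f g : ℝ → ℝ, InH1 f ∧ InH1 g ∧ (∫ x : ℝ, f x ^ 2 * g x) = lam ∧ Ifun α₀ β₀ f g = m}

/-- `M_lam`, the infimum of `I` subject to the constraint `∫ f² g = lam`. -/
def Mfun (α₀ β₀ lam : ℝ) : ℝ := sInf (IvalSet α₀ β₀ lam)

/-! ### The kernel and the operator `op` -/

/-- Real `L²` on the line. -/
abbrev L2R : Type := Lp ℝ 2 (volume : Measure ℝ)

/-- The kernel `t ↦ 1_{t ≤ x} exp (-a (x - t))` of `(d/dx + a)⁻¹`. -/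
def kf (a x : ℝ) : ℝ → ℝ := (Set.Iic x).indicator (fun t => Real.exp (a * (t - x)))

lemma expInt {a : ℝ} (ha : 0 < a) (x y : ℝ) :
    IntegrableOn (fun t => Real.exp (a * (t - x))) (Set.Iic y) := by
  have h := (integrableOn_exp_mul_Iic ha y).const_mul (Real.exp (-(a * x)))
  refine h.congr (ae_of_all _ fun t => ?_)
  simp only
  rw [← Real.exp_add]; congr 1; ring

lemma kf_integrable {a : ℝ} (ha : 0 < a) (x : ℝ) : Integrable (kf a x) := by
  rw [kf, integrable_indicator_iff measurableSet_Iic]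
  exact expInt ha x x

lemma kf_integral {a : ℝ} (ha : 0 < a) (x : ℝ) : ∫ t, kf a x t = 1 / a := by
  rw [kf, integral_indicator measurableSet_Iic]
  have : ∀ t, Real.exp (a * (t - x)) = Real.exp (-(a * x)) * Real.exp (a * t) := by
    intro t; rw [← Real.exp_add]; congr 1; ring
  simp_rw [this]
  rw [integral_const_mul, integral_exp_mul_Iic ha, ← mul_div_assoc, ← Real.exp_add]
  simp

lemma kf_nonneg (a x t : ℝ) : 0 ≤ kf a x t :=
  Set.indicator_nonneg (fun _ _ => (Real.exp_pos _).le) _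

lemma kf_sq (a x t : ℝ) : kf a x t ^ 2 = kf (2 * a) x t := by
  unfold kf
  by_cases h : t ∈ Set.Iic x
  · simp only [Set.indicator_of_mem h]
    rw [← Real.exp_nat_mul]; congr 1; push_cast; ring
  · simp [Set.indicator_of_notMem h]

lemma kf_memLp {a : ℝ} (ha : 0 < a) (x : ℝ) : MemLp (kf a x) 2 := by
  rw [memLp_two_iff_integrable_sq (kf_integrable ha x).1]
  simp_rw [kf_sq]
  exact kf_integrable (by positivity) x

lemma kf_mul {a : ℝ} {x y : ℝ} (h : x ≤ y) (t : ℝ) :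
    kf a x t * kf a y t = Real.exp (-(a * (y - x))) * kf (2 * a) x t := by
  unfold kf
  by_cases hx : t ∈ Set.Iic x
  · have hy : t ∈ Set.Iic y := le_trans hx h
    simp only [Set.indicator_of_mem hx, Set.indicator_of_mem hy]
    rw [← Real.exp_add, ← Real.exp_add]; congr 1; ring
  · simp [Set.indicator_of_notMem hx]

lemma kf_mul_integral {a : ℝ} (ha : 0 < a) (x y : ℝ) :
    ∫ t, kf a x t * kf a y t = Real.exp (-(a * |x - y|)) / (2 * a) := by
  rcases le_total x y with h | h
  · simp_rw [kf_mul h]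
    rw [integral_const_mul, kf_integral (by positivity), abs_sub_comm,
      abs_of_nonneg (sub_nonneg.2 h)]
    ring
  · simp_rw [mul_comm (kf a x _), kf_mul h]
    rw [integral_const_mul, kf_integral (by positivity),
      abs_of_nonneg (sub_nonneg.2 h)]
    ring

/-- `kf a x` as an element of `L²`, with the value `0` for `a ≤ 0`. -/
def kerL (a x : ℝ) : L2R := if ha : 0 < a then (kf_memLp ha x).toLp _ else 0

/-- The isometry of `L²` onto `H¹` with norm `(∫ f'² + a² f²)^{1/2}`, inverse to `f ↦ f' + a f`:
`op a u x = ∫_{t ≤ x} exp (-a (x - t)) u t`. -/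
def op (a : ℝ) (u : L2R) (x : ℝ) : ℝ := inner ℝ (kerL a x) u

lemma ker_coe {a : ℝ} (ha : 0 < a) (x : ℝ) : kerL a x =ᵐ[volume] kf a x := by
  rw [kerL, dif_pos ha]; exact MemLp.coeFn_toLp _

lemma op_eq {a : ℝ} (ha : 0 < a) (u : L2R) (x : ℝ) : op a u x = ∫ t, kf a x t * u t := by
  rw [op, L2.inner_def]
  refine integral_congr_ae ?_
  filter_upwards [ker_coe ha x] with t ht
  simp [ht, mul_comm]

lemma op_ker {a : ℝ} (ha : 0 < a) (x y : ℝ) :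
    op a (kerL a x) y = Real.exp (-(a * |x - y|)) / (2 * a) := by
  rw [op_eq ha, ← kf_mul_integral ha]
  refine integral_congr_ae ?_
  filter_upwards [ker_coe ha x] with t ht
  simp [ht, mul_comm]

lemma ker_norm {a : ℝ} (ha : 0 < a) (x : ℝ) : ‖kerL a x‖ ^ 2 = 1 / (2 * a) := by
  have := op_ker ha x x
  rw [op, real_inner_self_eq_norm_sq] at this
  simpa using this

lemma op_abs_le {a : ℝ} (ha : 0 < a) (u : L2R) (x : ℝ) :
    |op a u x| ≤ Real.sqrt (1 / (2 * a)) * ‖u‖ := by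
  rw [← ker_norm ha x, Real.sqrt_sq (norm_nonneg _)]
  exact abs_real_inner_le_norm _ _

lemma op_add (a : ℝ) (u v : L2R) (x : ℝ) : op a (u + v) x = op a u x + op a v x :=
  inner_add_right _ _ _
lemma op_sub (a : ℝ) (u v : L2R) (x : ℝ) : op a (u - v) x = op a u x - op a v x :=
  inner_sub_right _ _ _
lemma op_smul (a c : ℝ) (u : L2R) (x : ℝ) : op a (c • u) x = c * op a u x :=
  real_inner_smul_right _ _ _

/-- Cauchy–Schwarz for integrals of square-integrable functions. -/
lemma cs {f g : ℝ → ℝ} (hf : MemLp f 2) (hg : MemLp g 2) :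
    (∫ x, f x * g x) ^ 2 ≤ (∫ x, f x ^ 2) * ∫ x, g x ^ 2 := by
  have key : ∀ {p q : ℝ → ℝ} (hp : MemLp p 2) (hq : MemLp q 2),
      inner ℝ (hp.toLp p) (hq.toLp q) = ∫ x, p x * q x := by
    intro p q hp hq
    rw [L2.inner_def]
    refine integral_congr_ae ?_
    filter_upwards [hp.coeFn_toLp, hq.coeFn_toLp] with x h1 h2
    simp [h1, h2, mul_comm]
  have h := real_inner_mul_inner_self_le (hf.toLp f) (hg.toLp g)
  rw [key, key, key] at h
  simpa [sq] using h

lemma norm_sq_eq (u : L2R) : ‖u‖ ^ 2 = ∫ x, u x ^ 2 := by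
  rw [← real_inner_self_eq_norm_sq, L2.inner_def]
  refine integral_congr_ae (ae_of_all _ fun x => ?_)
  simp [sq]

lemma expu_intOn {a : ℝ} (ha : 0 < a) {u : ℝ → ℝ} (hu : MemLp u 2) (x : ℝ) :
    IntegrableOn (fun t => Real.exp (a * t) * u t) (Set.Iic x) := by
  have h := ((kf_memLp ha x).integrable_mul hu).const_mul (Real.exp (a * x))
  have h2 : IntegrableOn (fun t => Real.exp (a * x) * (kf a x * u) t) (Set.Iic x) := h.integrableOn
  refine h2.congr_fun (fun t ht => ?_) measurableSet_Iic
  simp only [Pi.mul_apply, kf, Set.indicator_of_mem ht]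
  rw [← mul_assoc, ← Real.exp_add]; congr 2; ring

lemma kint_eq {a : ℝ} (u : ℝ → ℝ) (x : ℝ) :
    ∫ t, kf a x t * u t = Real.exp (-(a * x)) * ∫ t in Set.Iic x, Real.exp (a * t) * u t := by
  rw [← integral_const_mul, ← integral_indicator measurableSet_Iic]
  refine integral_congr_ae (ae_of_all _ fun t => ?_)
  unfold kf
  by_cases h : t ∈ Set.Iic x
  · simp only [Set.indicator_of_mem h]
    rw [← mul_assoc, ← Real.exp_add]; congr 2; ring
  · simp [Set.indicator_of_notMem h]

lemma op_eq' {a : ℝ} (ha : 0 < a) (u : L2R) (x : ℝ) : op a u x =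
    Real.exp (-(a * x)) * ((∫ t in Set.Iic 0, Real.exp (a * t) * u t)
      + ∫ t in (0:ℝ)..x, Real.exp (a * t) * u t) := by
  rw [op_eq ha, kint_eq, ← intervalIntegral.integral_Iic_sub_Iic
    (expu_intOn ha (Lp.memLp u) 0) (expu_intOn ha (Lp.memLp u) x)]
  ring

lemma op_continuous {a : ℝ} (ha : 0 < a) (u : L2R) : Continuous (op a u) := by
  have : op a u = fun x => Real.exp (-(a * x)) * ((∫ t in Set.Iic 0, Real.exp (a * t) * u t)
      + ∫ t in (0:ℝ)..x, Real.exp (a * t) * u t) := funext (op_eq' ha u)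
  rw [this]
  have h : Continuous fun x => ∫ t in (0:ℝ)..x, Real.exp (a * t) * u t := by
    refine intervalIntegral.continuous_primitive (fun p q => ?_) 0
    rw [intervalIntegrable_iff]
    exact (expu_intOn ha (Lp.memLp u) (max p q)).mono_set (fun t ht => ht.2)
  fun_prop

/-- Young's inequality for the kernel: Cauchy–Schwarz with weight `kf a x`, then Tonelli. -/
lemma op_L2 {a : ℝ} (ha : 0 < a) (u : L2R) :
    Integrable (fun x => op a u x ^ 2) ∧ ∫ x, op a u x ^ 2 ≤ 1 / a ^ 2 * ‖u‖ ^ 2 := by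
  have hu2 : Integrable (fun t => u t ^ 2) := (Lp.memLp u).integrable_sq
  let g : ℝ → ℝ := fun s => kf a 0 (-s)
  have hg : Integrable g := (kf_integrable ha 0).comp_neg
  have hgi : ∫ s, g s = 1 / a := by
    rw [← kf_integral ha 0]; exact integral_neg_eq_self (kf a 0) volume
  have hk : ∀ x t, kf a x t = g (x - t) := by
    intro x t
    simp only [g, kf, Set.indicator_apply, Set.mem_Iic, neg_sub, sub_nonpos, sub_zero]
  let L := ContinuousLinearMap.mul ℝ ℝ
  have hci := hu2.integrable_convolution L hg
  have hcv := integral_convolution L hu2 hg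
  have hcd : ∀ x, convolution (fun t => (u t) ^ 2) g L volume x = ∫ t, kf a x t * u t ^ 2 := by
    intro x
    simp only [convolution, L, ContinuousLinearMap.mul_apply', hk]
    simp_rw [mul_comm]
  have hpt : ∀ᵐ x, op a u x ^ 2 ≤
      1 / a * convolution (fun t => (u t) ^ 2) g L volume x := by
    have hex := (hu2.convolution_integrand L hg).prod_right_ae
    filter_upwards [hex] with x hx
    have hx' : Integrable (fun t => kf a x t * u t ^ 2) := by
      refine hx.congr (ae_of_all _ fun t => ?_)
      simp [L, hk, mul_comm]
    have hsq : ∀ t, kf (a / 2) x t ^ 2 = kf a x t := by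
      intro t; rw [kf_sq]; congr 1; ring
    have hm2 : MemLp (fun t => kf (a / 2) x t * u t) 2 := by
      refine (memLp_two_iff_integrable_sq
        ((kf_integrable (half_pos ha) x).1.mul (Lp.memLp u).1)).2 ?_
      simpa only [Pi.mul_apply, mul_pow, hsq] using hx'
    have h := cs (kf_memLp (half_pos ha) x) hm2
    simp only [mul_pow, hsq, ← mul_assoc, ← sq] at h
    rw [op_eq ha, hcd, ← kf_integral ha x]
    exact h
  have hsqInt : Integrable (fun x => op a u x ^ 2) := by
    refine (hci.const_mul (1 / a)).mono' ((op_continuous ha u).pow 2).aestronglyMeasurable ?_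
    filter_upwards [hpt] with x hx
    rwa [Real.norm_of_nonneg (sq_nonneg _)]
  refine ⟨hsqInt, ?_⟩
  calc _ ≤ ∫ x, 1 / a * convolution (fun t => (u t) ^ 2) g L volume x :=
        integral_mono_ae hsqInt (hci.const_mul _) hpt
    _ = _ := by
        rw [integral_const_mul, hcv, hgi, norm_sq_eq]
        simp only [L, ContinuousLinearMap.mul_apply']
        ring

/-! ### The correspondence between `L²` and `H¹` -/

lemma InH1.memLp {f : ℝ → ℝ} (hf : InH1 f) : MemLp f 2 :=
  (memLp_two_iff_integrable_sq hf.1.continuous.aestronglyMeasurable).2 hf.2.1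

lemma InH1.memLp_deriv {f : ℝ → ℝ} (hf : InH1 f) : MemLp (deriv f) 2 :=
  (memLp_two_iff_integrable_sq (measurable_deriv f).aestronglyMeasurable).2 hf.2.2

/-- Every function of class `InH1` is `op a u` for `u = f' + a f`, and the cross term in `‖u‖²`
vanishes, since `2 f f' = (f²)'` integrates to zero. -/
lemma exists_op {a : ℝ} (ha : 0 < a) {f : ℝ → ℝ} (hf : InH1 f) :
    ∃ u : L2R, (∀ x, op a u x = f x) ∧ ‖u‖ ^ 2 = ∫ x, (deriv f x ^ 2 + a ^ 2 * f x ^ 2) ∧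
      u =ᵐ[volume] fun x => deriv f x + a * f x := by
  have hm : MemLp (fun x => deriv f x + a * f x) 2 := hf.memLp_deriv.add (hf.memLp.const_mul a)
  have hff' : Integrable (fun x => f x * deriv f x) := hf.memLp.integrable_mul hf.memLp_deriv
  have hd : ∀ x, HasDerivAt f (deriv f x) x := fun x => (hf.1 x).hasDerivAt
  have hd2 : ∀ x, HasDerivAt (fun x => f x ^ 2) (2 * (f x * deriv f x)) x := by
    intro x
    refine ((hd x).pow 2).congr_deriv ?_
    push_cast; ring
  have h0 := integral_eq_zero_of_hasDerivAt_of_integrable hd2 (hff'.const_mul 2) hf.2.1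
  have hlim2 : Tendsto (fun x => f x ^ 2) atBot (𝓝 0) :=
    tendsto_zero_of_hasDerivAt_of_integrableOn_Iic (a := 0) (fun x _ => hd2 x)
      (hff'.const_mul 2).integrableOn hf.2.1.integrableOn
  have hlim : Tendsto f atBot (𝓝 0) := by
    have := hlim2.sqrt
    simp only [Real.sqrt_sq_eq_abs, Real.sqrt_zero] at this
    exact (tendsto_zero_iff_abs_tendsto_zero f).2 this
  refine ⟨hm.toLp _, fun x => ?_, ?_, hm.coeFn_toLp⟩
  · rw [op_eq ha]
    have : ∫ t, kf a x t * (hm.toLp _ : L2R) t = ∫ t, kf a x t * (deriv f t + a * f t) := by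
      refine integral_congr_ae ?_
      filter_upwards [hm.coeFn_toLp] with t ht
      rw [ht]
    rw [this, kint_eq]
    have hE : ∀ t ∈ Set.Iic x, HasDerivAt (fun t => Real.exp (a * t) * f t)
        (Real.exp (a * t) * (deriv f t + a * f t)) t := by
      intro t _
      have h1 : HasDerivAt (fun t => Real.exp (a * t)) (Real.exp (a * t) * (a * 1)) t :=
        ((hasDerivAt_id t).const_mul a).exp
      refine (h1.mul (hd t)).congr_deriv ?_
      ring
    have hl : Tendsto (fun t => Real.exp (a * t) * f t) atBot (𝓝 0) := by
      have : Tendsto (fun t => Real.exp (a * t)) atBot (𝓝 0) :=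
        Real.tendsto_exp_atBot.comp (tendsto_id.const_mul_atBot ha)
      simpa using this.mul hlim
    rw [integral_Iic_of_hasDerivAt_of_tendsto' hE (expu_intOn ha hm x) hl, sub_zero,
      ← mul_assoc, ← Real.exp_add]
    simp
  · rw [norm_sq_eq]
    have : ∫ t, (hm.toLp _ : L2R) t ^ 2 = ∫ t, (deriv f t + a * f t) ^ 2 := by
      refine integral_congr_ae ?_
      filter_upwards [hm.coeFn_toLp] with t ht
      rw [ht]
    rw [this]
    have h1 : Integrable (fun x => deriv f x ^ 2 + a ^ 2 * f x ^ 2) :=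
      hf.2.2.add (hf.2.1.const_mul _)
    have : ∀ t, (deriv f t + a * f t) ^ 2 =
        (deriv f t ^ 2 + a ^ 2 * f t ^ 2) + a * (2 * (f t * deriv f t)) := fun t => by ring
    simp_rw [this]
    rw [integral_add h1 ((hff'.const_mul 2).const_mul a), integral_const_mul, h0]
    simp

/-- Continuous, bounded and square-integrable: the regularity shared by all functions `op a u`. -/
structure Good (f : ℝ → ℝ) : Prop where
  cont : Continuous f
  bdd : ∃ C, ∀ x, |f x| ≤ C
  mem : MemLp f 2

lemma op_good {a : ℝ} (ha : 0 < a) (u : L2R) : Good (op a u) where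
  cont := op_continuous ha u
  bdd := ⟨_, op_abs_le ha u⟩
  mem := (memLp_two_iff_integrable_sq (op_continuous ha u).aestronglyMeasurable).2 (op_L2 ha u).1

lemma Good.mul {f g : ℝ → ℝ} (hf : Good f) (hg : Good g) : Good (fun x => f x * g x) := by
  obtain ⟨C, hC⟩ := hf.bdd
  obtain ⟨D, hD⟩ := hg.bdd
  refine ⟨hf.cont.mul hg.cont, ⟨C * D, fun x => ?_⟩, ?_⟩
  · rw [abs_mul]
    exact mul_le_mul (hC x) (hD x) (abs_nonneg _) ((abs_nonneg _).trans (hC x))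
  · refine (hg.mem.const_mul C).mono (hf.cont.mul hg.cont).aestronglyMeasurable
      (ae_of_all _ fun x => ?_)
    rw [norm_mul, norm_mul]
    refine mul_le_mul_of_nonneg_right ?_ (norm_nonneg _)
    exact (hC x).trans (le_abs_self C)

lemma Good.int {f g : ℝ → ℝ} (hf : Good f) (hg : Good g) : Integrable (fun x => f x * g x) :=
  hf.mem.integrable_mul hg.mem

lemma Good.add {f g : ℝ → ℝ} (hf : Good f) (hg : Good g) : Good (fun x => f x + g x) := by
  obtain ⟨C, hC⟩ := hf.bdd
  obtain ⟨D, hD⟩ := hg.bdd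
  refine ⟨hf.cont.add hg.cont, ⟨C + D, fun x => ?_⟩, hf.mem.add hg.mem⟩
  exact (abs_add_le _ _).trans (add_le_add (hC x) (hD x))

lemma Good.smul {f : ℝ → ℝ} (c : ℝ) (hf : Good f) : Good (fun x => c * f x) := by
  obtain ⟨C, hC⟩ := hf.bdd
  refine ⟨hf.cont.const_mul c, ⟨|c| * C, fun x => ?_⟩, hf.mem.const_mul c⟩
  rw [abs_mul]
  exact mul_le_mul_of_nonneg_left (hC x) (abs_nonneg _)

lemma Good.sq_int {f : ℝ → ℝ} (hf : Good f) : Integrable (fun x => f x ^ 2) := hf.mem.integrable_sq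

lemma op_toLp {a : ℝ} (ha : 0 < a) {p : ℝ → ℝ} (hp : MemLp p 2) (x : ℝ) :
    op a (hp.toLp p) x = Real.exp (-(a * x)) * ∫ t in Set.Iic x, Real.exp (a * t) * p t := by
  rw [op_eq ha, ← kint_eq]
  refine integral_congr_ae ?_
  filter_upwards [hp.coeFn_toLp] with t ht
  rw [ht]

lemma op_hasDerivAt {a : ℝ} (ha : 0 < a) {p : ℝ → ℝ} (hp : MemLp p 2) (hc : Continuous p) (x : ℝ) :
    HasDerivAt (op a (hp.toLp p)) (p x - a * op a (hp.toLp p) x) x := by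
  have hE : op a (hp.toLp p) = fun x => Real.exp (-(a * x)) *
      ((∫ t in Set.Iic 0, Real.exp (a * t) * p t) + ∫ t in (0:ℝ)..x, Real.exp (a * t) * p t) := by
    funext y
    rw [op_toLp ha hp, ← intervalIntegral.integral_Iic_sub_Iic
      (expu_intOn ha hp 0) (expu_intOn ha hp y)]
    ring
  have hc' : Continuous fun t => Real.exp (a * t) * p t := by fun_prop
  have h1 : HasDerivAt (fun x => ∫ t in (0:ℝ)..x, Real.exp (a * t) * p t)
      (Real.exp (a * x) * p x) x :=
    intervalIntegral.integral_hasDerivAt_right (hc'.intervalIntegrable _ _)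
      hc'.aestronglyMeasurable.stronglyMeasurableAtFilter hc'.continuousAt
  have h2 : HasDerivAt (fun x => Real.exp (-(a * x))) (Real.exp (-(a * x)) * (-(a * 1))) x :=
    (((hasDerivAt_id x).const_mul a).neg).exp
  rw [hE]
  refine (h2.mul (h1.const_add _)).congr_deriv ?_
  have h3 : Real.exp (-(a * x)) * Real.exp (a * x) = 1 := by rw [← Real.exp_add]; simp
  linear_combination p x * h3

lemma op_inH1 {a : ℝ} (ha : 0 < a) {p : ℝ → ℝ} (hp : MemLp p 2) (hc : Continuous p) :
    InH1 (op a (hp.toLp p)) := by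
  have hd := op_hasDerivAt ha hp hc
  refine ⟨fun x => (hd x).differentiableAt, (op_good ha _).sq_int, ?_⟩
  have : deriv (op a (hp.toLp p)) = fun x => p x - a * op a (hp.toLp p) x :=
    funext fun x => (hd x).deriv
  rw [this]
  exact (hp.sub ((op_good ha _).mem.const_mul a)).integrable_sq

/-- Weak solutions `-f'' + a² f = c p` with continuous right-hand side are classical. The weak
equation is tested with `kerL a x`, for which `op a (kerL a x)` is the Green function
`exp (-a |x - ·|) / (2 a)`; this writes `f = op a u` as an explicit convolution. -/
lemma regularity {a : ℝ} (ha : 0 < a) (u : L2R) (c : ℝ) {p : ℝ → ℝ} (hp : Good p)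
    (hpi : Integrable p) (hw : ∀ h : L2R, inner ℝ u h = c * ∫ y, p y * op a h y) :
    InH1 (op a u) ∧ ∫ x, (deriv (op a u) x ^ 2 + a ^ 2 * op a u x ^ 2) = ‖u‖ ^ 2 := by
  set f := op a u with hfdef
  set F := op a (hp.mem.toLp p) with hFdef
  have hfG : Good f := op_good ha u
  have hFG : Good F := op_good ha _
  have hFd : ∀ x, HasDerivAt F (p x - a * F x) x := op_hasDerivAt ha hp.mem hp.cont
  have hc' : Continuous fun t => Real.exp (-(a * t)) * p t := by
    have := hp.cont; fun_prop
  have hIoi : ∀ x, IntegrableOn (fun t => Real.exp (-(a * t)) * p t) (Set.Ioi x) := by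
    intro x
    obtain ⟨C, hC⟩ := hp.bdd
    have h1 := (exp_neg_integrableOn_Ioi x ha).mul_const C
    refine h1.mono' hc'.aestronglyMeasurable.restrict (ae_of_all _ fun t => ?_)
    rw [norm_mul, Real.norm_of_nonneg (Real.exp_pos _).le, neg_mul]
    exact mul_le_mul_of_nonneg_left (hC t) (Real.exp_pos _).le
  have hrep : ∀ x, f x = c / (2 * a) * (F x + Real.exp (a * x) *
      ((∫ t in Set.Ioi 0, Real.exp (-(a * t)) * p t)
        - ∫ t in (0:ℝ)..x, Real.exp (-(a * t)) * p t)) := by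
    intro x
    have h1 : f x = c * ∫ y, p y * (Real.exp (-(a * |x - y|)) / (2 * a)) := by
      rw [hfdef, op, real_inner_comm, hw]
      simp_rw [op_ker ha]
    have hi : Integrable (fun y => p y * (Real.exp (-(a * |x - y|)) / (2 * a))) := by
      refine (hpi.norm.mul_const (1 / (2 * a))).mono' (by
        have := hp.cont
        exact Continuous.aestronglyMeasurable (by fun_prop)) (ae_of_all _ fun y => ?_)
      rw [norm_mul]
      refine mul_le_mul_of_nonneg_left ?_ (norm_nonneg _)
      rw [Real.norm_of_nonneg (by positivity)]
      gcongr
      exact Real.exp_le_one_iff.2 (by simp only [Left.neg_nonpos_iff]; positivity)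
    rw [h1, ← intervalIntegral.integral_Iic_add_Ioi (b := x) hi.integrableOn hi.integrableOn]
    have e1 : ∫ y in Set.Iic x, p y * (Real.exp (-(a * |x - y|)) / (2 * a)) = F x / (2 * a) := by
      rw [hFdef, op_toLp ha, ← integral_const_mul, ← integral_div]
      refine setIntegral_congr_fun measurableSet_Iic fun y hy => ?_
      rw [abs_of_nonneg (sub_nonneg.2 hy), ← mul_assoc, ← Real.exp_add,
        show -(a * (x - y)) = -(a * x) + a * y by ring]
      ring
    have e2 : ∫ y in Set.Ioi x, p y * (Real.exp (-(a * |x - y|)) / (2 * a))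
        = Real.exp (a * x) * (∫ t in Set.Ioi x, Real.exp (-(a * t)) * p t) / (2 * a) := by
      rw [← integral_const_mul, ← integral_div]
      refine setIntegral_congr_fun measurableSet_Ioi fun y hy => ?_
      rw [abs_of_nonpos (sub_nonpos.2 (le_of_lt hy)), ← mul_assoc, ← Real.exp_add,
        show -(a * -(x - y)) = a * x + -(a * y) by ring]
      ring
    have e3 := intervalIntegral.integral_interval_add_Ioi (hIoi 0) (hIoi x)
    rw [e1, e2, ← e3]
    ring
  have hfd : ∀ x, HasDerivAt f (a * f x - c * F x) x := by
    intro x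
    have h1 : HasDerivAt (fun x => ∫ t in (0:ℝ)..x, Real.exp (-(a * t)) * p t)
        (Real.exp (-(a * x)) * p x) x :=
      intervalIntegral.integral_hasDerivAt_right (hc'.intervalIntegrable _ _)
        hc'.aestronglyMeasurable.stronglyMeasurableAtFilter hc'.continuousAt
    have h2 : HasDerivAt (fun x => Real.exp (a * x)) (Real.exp (a * x) * (a * 1)) x :=
      ((hasDerivAt_id x).const_mul a).exp
    have h3 : Real.exp (a * x) * Real.exp (-(a * x)) = 1 := by rw [← Real.exp_add]; simp
    have hx := hrep x
    have hd := ((hFd x).add (h2.mul (h1.const_sub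
      (∫ t in Set.Ioi 0, Real.exp (-(a * t)) * p t)))).const_mul (c / (2 * a))
    refine (hd.congr_of_eventuallyEq (f₁ := f)
      (Eventually.of_forall fun y => hrep y)).congr_deriv ?_
    rw [hx]
    have hc2 : c = c / (2 * a) * (2 * a) := by field_simp
    linear_combination (-(c / (2 * a)) * p x) * h3 + F x * hc2
  have hfdG : Good (fun x => a * f x + -c * F x) := (hfG.smul a).add (hFG.smul (-c))
  have hde : deriv f = fun x => a * f x + -c * F x := by
    funext x; rw [(hfd x).deriv]; ring
  refine ⟨⟨fun x => (hfd x).differentiableAt, hfG.sq_int, ?_⟩, ?_⟩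
  · rw [hde]; exact hfdG.sq_int
  · have hnorm : ‖u‖ ^ 2 = c * ∫ y, p y * f y := by
      rw [← real_inner_self_eq_norm_sq, hw]
    have hdd : ∀ x, HasDerivAt (fun x => f x * (a * f x + -c * F x))
        (((a * f x + -c * F x) ^ 2 + a ^ 2 * f x ^ 2) - c * (p x * f x)) x := by
      intro x
      refine ((hfd x).mul (((hfd x).const_mul a).add ((hFd x).const_mul (-c)))).congr_deriv ?_
      simp only [Pi.add_apply]
      ring
    have hi1 : Integrable (fun x => (a * f x + -c * F x) ^ 2 + a ^ 2 * f x ^ 2) :=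
      hfdG.sq_int.add (hfG.sq_int.const_mul _)
    have hi2 : Integrable (fun x => c * (p x * f x)) := (hp.int hfG).const_mul c
    have h0 := integral_eq_zero_of_hasDerivAt_of_integrable hdd (hi1.sub hi2) (hfG.int hfdG)
    rw [integral_sub hi1 hi2, integral_const_mul, ← hnorm] at h0
    rw [hde]
    linarith

/-! ### Scaling -/

lemma op_energy {a : ℝ} (ha : 0 < a) {p : ℝ → ℝ} (hp : MemLp p 2) (hc : Continuous p) :
    ∫ x, (deriv (op a (hp.toLp p)) x ^ 2 + a ^ 2 * op a (hp.toLp p) x ^ 2)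
      = ‖hp.toLp p‖ ^ 2 := by
  obtain ⟨u, -, hu2, hu3⟩ := exists_op ha (op_inH1 ha hp hc)
  rw [← hu2]
  congr 2
  refine Lp.ext ?_
  filter_upwards [hu3, hp.coeFn_toLp] with x h1 h2
  rw [h1, h2, (op_hasDerivAt ha hp hc x).deriv]
  ring

lemma Ifun_eq {a b : ℝ} {f g : ℝ → ℝ} (hf : InH1 f) (hg : InH1 g) :
    Ifun (a ^ 2) (b ^ 2) f g = (∫ x, (deriv f x ^ 2 + a ^ 2 * f x ^ 2))
      + ∫ x, (deriv g x ^ 2 + b ^ 2 * g x ^ 2) := by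
  have h1 : Integrable (fun x => deriv f x ^ 2 + a ^ 2 * f x ^ 2) :=
    hf.2.2.add (hf.2.1.const_mul _)
  have h2 : Integrable (fun x => deriv g x ^ 2 + b ^ 2 * g x ^ 2) :=
    hg.2.2.add (hg.2.1.const_mul _)
  rw [← integral_add h1 h2]
  unfold Ifun
  congr 1
  funext x
  ring

lemma InH1.smul {f : ℝ → ℝ} (hf : InH1 f) (c : ℝ) : InH1 (fun x => c * f x) := by
  refine ⟨hf.1.const_mul c, ?_, ?_⟩
  · simp_rw [mul_pow]; exact hf.2.1.const_mul _
  · simp_rw [deriv_const_mul_field, mul_pow]; exact hf.2.2.const_mul _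

lemma Ifun_nonneg {a b : ℝ} (f g : ℝ → ℝ) : 0 ≤ Ifun (a ^ 2) (b ^ 2) f g :=
  integral_nonneg fun x => by positivity

lemma Mfun_le {a b lam : ℝ} {f g : ℝ → ℝ} (hf : InH1 f) (hg : InH1 g)
    (h : ∫ x, f x ^ 2 * g x = lam) : Mfun (a ^ 2) (b ^ 2) lam ≤ Ifun (a ^ 2) (b ^ 2) f g := by
  refine csInf_le ⟨0, ?_⟩ ⟨f, g, hf, hg, h, rfl⟩
  rintro m ⟨f, g, -, -, -, rfl⟩
  exact Ifun_nonneg f g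

lemma Mfun_nonneg {a b lam : ℝ} : 0 ≤ Mfun (a ^ 2) (b ^ 2) lam := by
  refine Real.sInf_nonneg ?_
  rintro m ⟨f, g, -, -, -, rfl⟩
  exact Ifun_nonneg f g

/-- Homogeneity turns a pair with nonzero cubic integral into an admissible one. -/
lemma exists_scale {lam J : ℝ} (hlam : 0 < lam) (hJ : J ≠ 0) :
    ∃ t s : ℝ, t ^ 2 * s * J = lam ∧ s ^ 2 = t ^ 2 := by
  obtain ⟨σ, hσ, hpos⟩ : ∃ σ : ℝ, σ ^ 2 = 1 ∧ 0 < σ * J := by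
    rcases lt_or_gt_of_ne hJ with h | h
    · exact ⟨-1, by norm_num, by linarith⟩
    · exact ⟨1, by norm_num, by linarith⟩
  have hq : 0 < lam / (σ * J) := div_pos hlam hpos
  have ht : ((lam / (σ * J)) ^ ((1:ℝ) / 3)) ^ 3 = lam / (σ * J) := by
    rw [← Real.rpow_natCast, ← Real.rpow_mul hq.le]; norm_num
  refine ⟨(lam / (σ * J)) ^ ((1:ℝ) / 3), (lam / (σ * J)) ^ ((1:ℝ) / 3) * σ, ?_, ?_⟩
  · calc _ = ((lam / (σ * J)) ^ ((1:ℝ) / 3)) ^ 3 * (σ * J) := by ring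
      _ = lam := by rw [ht]; exact div_mul_cancel₀ _ hpos.ne'
  · rw [mul_pow, hσ, mul_one]

lemma scale_int (f g : ℝ → ℝ) (t s : ℝ) :
    ∫ x, (t * f x) ^ 2 * (s * g x) = t ^ 2 * s * ∫ x, f x ^ 2 * g x := by
  rw [← integral_const_mul]; congr 1; funext x; ring

/-- The scale-invariant form of `M ≤ I` on the class `InH1`. -/
lemma class_bound {a b lam : ℝ} (hlam : 0 < lam) {f g : ℝ → ℝ} (hf : InH1 f) (hg : InH1 g) :
    Mfun (a ^ 2) (b ^ 2) lam ^ 3 * (∫ x, f x ^ 2 * g x) ^ 2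
      ≤ lam ^ 2 * Ifun (a ^ 2) (b ^ 2) f g ^ 3 := by
  set J := ∫ x, f x ^ 2 * g x with hJ
  set Q := Ifun (a ^ 2) (b ^ 2) f g with hI
  have hI0 : 0 ≤ Q := Ifun_nonneg f g
  by_cases h0 : J = 0
  · rw [h0]; simp only [ne_eq, OfNat.ofNat_ne_zero, not_false_eq_true, zero_pow, mul_zero]
    positivity
  obtain ⟨t, s, hts, hst⟩ := exists_scale hlam h0
  have h1 : Mfun (a ^ 2) (b ^ 2) lam ≤ t ^ 2 * Q := by
    have h := Mfun_le (a := a) (b := b) (hf.smul t) (hg.smul s) ((scale_int f g t s).trans hts)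
    refine h.trans_eq ?_
    rw [hI, Ifun, Ifun, ← integral_const_mul]
    congr 1; funext x
    rw [deriv_const_mul_field, deriv_const_mul_field]
    linear_combination (deriv g x ^ 2 + b ^ 2 * g x ^ 2) * hst
  calc _ ≤ (t ^ 2 * Q) ^ 3 * J ^ 2 := by
        gcongr
        exact Mfun_nonneg
    _ = (t ^ 2 * s * J) ^ 2 * Q ^ 3 := by
        linear_combination (-(t ^ 4 * J ^ 2 * Q ^ 3)) * hst
    _ = _ := by rw [hts]

/-! ### Brezis–Lieb splitting and the extension to `L² × L²` -/

/-- The mixed terms of the splitting vanish in the limit: `h r_n → 0` in `L²` by dominated convergence,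
and `q_n` is bounded in `L²`. -/
lemma small_term {h : ℝ → ℝ} (hh : Good h) {q r : ℕ → ℝ → ℝ} (hq : ∀ n, Good (q n))
    (hr : ∀ n, Good (r n)) {C : ℝ} (hrC : ∀ n x, |r n x| ≤ C) (hqC : ∀ n, ∫ x, q n x ^ 2 ≤ C)
    (hr0 : ∀ x, Tendsto (fun n => r n x) atTop (𝓝 0)) :
    Tendsto (fun n => ∫ x, q n x * (h x * r n x)) atTop (𝓝 0) := by
  have hC : 0 ≤ C := (abs_nonneg _).trans (hrC 0 0)
  have h1 : Tendsto (fun n => ∫ x, (h x * r n x) ^ 2) atTop (𝓝 (∫ _x : ℝ, (0:ℝ))) := by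
    refine tendsto_integral_of_dominated_convergence (fun x => C ^ 2 * h x ^ 2)
      (fun n => ((hh.cont.mul (hr n).cont).pow 2).aestronglyMeasurable)
      (hh.sq_int.const_mul _) (fun n => ae_of_all _ fun x => ?_) (ae_of_all _ fun x => ?_)
    · rw [Real.norm_of_nonneg (sq_nonneg _), mul_pow, mul_comm]
      refine mul_le_mul_of_nonneg_right ?_ (sq_nonneg _)
      exact sq_le_sq' (abs_le.1 (hrC n x)).1 (abs_le.1 (hrC n x)).2
    · have := ((hr0 x).const_mul (h x)).pow 2
      simpa using this
  rw [integral_zero] at h1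
  have h2 : Tendsto (fun n => Real.sqrt (C * ∫ x, (h x * r n x) ^ 2)) atTop (𝓝 0) := by
    simpa using (h1.const_mul C).sqrt
  refine squeeze_zero_norm (fun n => ?_) h2
  rw [Real.norm_eq_abs]
  refine Real.abs_le_sqrt ((cs (hq n).mem (hh.mul (hr n)).mem).trans ?_)
  exact mul_le_mul_of_nonneg_right (hqC n) (integral_nonneg fun x => sq_nonneg _)

/-- Brezis–Lieb splitting for the cubic form: all mixed terms have the shape of `small_term`. -/
lemma brezis_lieb {f g : ℝ → ℝ} (hf : Good f) (hg : Good g) {r s : ℕ → ℝ → ℝ}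
    (hr : ∀ n, Good (r n)) (hs : ∀ n, Good (s n)) {C : ℝ}
    (hrC : ∀ n x, |r n x| ≤ C) (hsC : ∀ n x, |s n x| ≤ C)
    (hrC2 : ∀ n, ∫ x, r n x ^ 2 ≤ C) (hsC2 : ∀ n, ∫ x, s n x ^ 2 ≤ C)
    (hr0 : ∀ x, Tendsto (fun n => r n x) atTop (𝓝 0))
    (hs0 : ∀ x, Tendsto (fun n => s n x) atTop (𝓝 0)) :
    Tendsto (fun n => (∫ x, (f x + r n x) ^ 2 * (g x + s n x)) - ∫ x, r n x ^ 2 * s n x)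
      atTop (𝓝 (∫ x, f x ^ 2 * g x)) := by
  set D := max C (∫ x, f x ^ 2) with hD
  have hrD := fun n x => (hrC n x).trans (le_max_left C (∫ x, f x ^ 2))
  have hsD := fun n x => (hsC n x).trans (le_max_left C (∫ x, f x ^ 2))
  have hrD2 := fun n => (hrC2 n).trans (le_max_left C (∫ x, f x ^ 2))
  have hsD2 := fun n => (hsC2 n).trans (le_max_left C (∫ x, f x ^ 2))
  have t1 := small_term hf (q := fun _ => f) (fun _ => hf) hs hsD (fun _ => le_max_right _ _) hs0
  have t2 := small_term hg (q := fun _ => f) (fun _ => hf) hr hrD (fun _ => le_max_right _ _) hr0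
  have t3 := small_term hf hs hr hrD hsD2 hr0
  have t4 := small_term hg hr hr hrD hrD2 hr0
  have key : ∀ n, (∫ x, (f x + r n x) ^ 2 * (g x + s n x)) - ∫ x, r n x ^ 2 * s n x
      = (∫ x, f x ^ 2 * g x) + (∫ x, f x * (f x * s n x)) + 2 * (∫ x, f x * (g x * r n x))
        + 2 * (∫ x, s n x * (f x * r n x)) + ∫ x, r n x * (g x * r n x) := by
    intro n
    have i0 : Integrable (fun x => f x ^ 2 * g x) := by
      simpa only [sq, mul_assoc] using hf.int (hf.mul hg)
    have i1 := hf.int (hf.mul (hs n))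
    have i2 := (hf.int (hg.mul (hr n))).const_mul 2
    have i3 := ((hs n).int (hf.mul (hr n))).const_mul 2
    have i4 := (hr n).int (hg.mul (hr n))
    have i5 : Integrable (fun x => r n x ^ 2 * s n x) := by
      simpa only [sq, mul_assoc] using (hr n).int ((hr n).mul (hs n))
    have : ∀ x, (f x + r n x) ^ 2 * (g x + s n x) = f x ^ 2 * g x + f x * (f x * s n x)
        + 2 * (f x * (g x * r n x)) + 2 * (s n x * (f x * r n x)) + r n x * (g x * r n x)
        + r n x ^ 2 * s n x := fun x => by ring
    simp_rw [this]
    rw [integral_add (by exact (((i0.add i1).add i2).add i3).add i4) i5,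
      integral_add (by exact ((i0.add i1).add i2).add i3) i4,
      integral_add (by exact (i0.add i1).add i2) i3, integral_add (by exact i0.add i1) i2,
      integral_add i0 i1,
      integral_const_mul, integral_const_mul]
    ring
  simp_rw [key]
  have := (((tendsto_const_nhds (x := ∫ x, f x ^ 2 * g x)).add t1).add (t2.const_mul 2)).add
    (t3.const_mul 2) |>.add t4
  simpa using this

/-- The cubic form `∫ f² g` in the `L²` variables `u = f' + a f`, `v = g' + b g`. -/
def Jf (a b : ℝ) (u v : L2R) : ℝ := ∫ x, op a u x ^ 2 * op b v x

lemma brezis_lieb_L2 {a b : ℝ} (ha : 0 < a) (hb : 0 < b) {U V : ℕ → L2R} {u v : L2R} {R : ℝ}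
    (hU : ∀ n, ‖U n‖ ≤ R) (hV : ∀ n, ‖V n‖ ≤ R)
    (hUw : ∀ h : L2R, Tendsto (fun n => inner ℝ h (U n)) atTop (𝓝 (inner ℝ h u)))
    (hVw : ∀ h : L2R, Tendsto (fun n => inner ℝ h (V n)) atTop (𝓝 (inner ℝ h v))) :
    Tendsto (fun n => Jf a b (U n) (V n) - Jf a b (U n - u) (V n - v)) atTop
      (𝓝 (Jf a b u v)) := by
  have hsub : ∀ {W : ℕ → L2R} {w : L2R} {c : ℝ}, 0 < c → (∀ n, ‖W n‖ ≤ R) →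
      (∀ h : L2R, Tendsto (fun n => inner ℝ h (W n)) atTop (𝓝 (inner ℝ h w))) →
      ∃ C : ℝ, (∀ n x, |op c (W n - w) x| ≤ C) ∧ (∀ n, ∫ x, op c (W n - w) x ^ 2 ≤ C) ∧
        ∀ x, Tendsto (fun n => op c (W n - w) x) atTop (𝓝 0) := by
    intro W w c hc hW hw
    have hn : ∀ n, ‖W n - w‖ ≤ R + ‖w‖ := fun n => (norm_sub_le _ _).trans (by gcongr; exact hW n)
    refine ⟨max (Real.sqrt (1 / (2 * c)) * (R + ‖w‖)) (1 / c ^ 2 * (R + ‖w‖) ^ 2),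
      fun n x => ?_, fun n => ?_, fun x => ?_⟩
    · refine (op_abs_le hc _ x).trans (le_max_of_le_left ?_)
      gcongr; exact hn n
    · refine (op_L2 hc _).2.trans (le_max_of_le_right ?_)
      gcongr; exact hn n
    · simp_rw [op_sub]
      have := (hw (kerL c x)).sub_const (op c w x)
      simpa [op] using this
  obtain ⟨C, c1, c2, c3⟩ := hsub ha hU hUw
  obtain ⟨D, d1, d2, d3⟩ := hsub hb hV hVw
  have := brezis_lieb (op_good ha u) (op_good hb v) (fun n => op_good ha (U n - u))
    (fun n => op_good hb (V n - v)) (C := max C D)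
    (fun n x => (c1 n x).trans (le_max_left _ _)) (fun n x => (d1 n x).trans (le_max_right _ _))
    (fun n => (c2 n).trans (le_max_left _ _)) (fun n => (d2 n).trans (le_max_right _ _)) c3 d3
  unfold Jf
  simpa only [← op_add, add_sub_cancel] using this

lemma Jf_bound {a b : ℝ} (ha : 0 < a) (hb : 0 < b) (u v : L2R) :
    |Jf a b u v| ≤ Real.sqrt (1 / (2 * b)) * ‖v‖ * (1 / a ^ 2 * ‖u‖ ^ 2) := by
  have hi := (op_good ha u).sq_int
  calc |Jf a b u v| ≤ ∫ x, Real.sqrt (1 / (2 * b)) * ‖v‖ * op a u x ^ 2 := by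
        rw [Jf, ← Real.norm_eq_abs]
        refine norm_integral_le_of_norm_le (hi.const_mul _) (ae_of_all _ fun x => ?_)
        rw [norm_mul, Real.norm_of_nonneg (sq_nonneg _), mul_comm]
        exact mul_le_mul_of_nonneg_right (op_abs_le hb v x) (sq_nonneg _)
    _ ≤ _ := by
        rw [integral_const_mul]
        gcongr
        exact (op_L2 ha u).2

/-- The scale-invariant inequality extends to all of `L² × L²` by density of continuous functions,
`Jf` being continuous by the Brezis–Lieb splitting. -/
lemma L2_bound {a b lam : ℝ} (ha : 0 < a) (hb : 0 < b) (hlam : 0 < lam) (u v : L2R) :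
    Mfun (a ^ 2) (b ^ 2) lam ^ 3 * Jf a b u v ^ 2 ≤ lam ^ 2 * (‖u‖ ^ 2 + ‖v‖ ^ 2) ^ 3 := by
  have hdense : ∀ (w : L2R) {c : ℝ}, 0 < c → ∃ W : ℕ → L2R, Tendsto W atTop (𝓝 w) ∧
      ∀ n, InH1 (op c (W n)) ∧
        ∫ x, (deriv (op c (W n)) x ^ 2 + c ^ 2 * op c (W n) x ^ 2) = ‖W n‖ ^ 2 := by
    intro w c hc
    have : ∀ n : ℕ, ∃ W : L2R, dist W w ≤ 1 / ((n : ℝ) + 1) ∧ InH1 (op c W) ∧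
        ∫ x, (deriv (op c W) x ^ 2 + c ^ 2 * op c W x ^ 2) = ‖W‖ ^ 2 := by
      intro n
      have hε : (0:ℝ) < 1 / ((n : ℝ) + 1) := by positivity
      obtain ⟨p, -, hp1, hp2, hp3⟩ := (Lp.memLp w).exists_hasCompactSupport_eLpNorm_sub_le
        (by simp) (ENNReal.ofReal_pos.2 hε).ne'
      refine ⟨hp3.toLp p, ?_, op_inH1 hc hp3 hp2, op_energy hc hp3 hp2⟩
      rw [dist_comm, dist_edist, Lp.edist_def]
      refine ENNReal.toReal_le_of_le_ofReal hε.le (le_trans (le_of_eq ?_) hp1)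
      refine eLpNorm_congr_ae ?_
      filter_upwards [hp3.coeFn_toLp] with x hx
      simp [hx]
    choose W hW1 hW2 using this
    refine ⟨W, ?_, hW2⟩
    rw [tendsto_iff_dist_tendsto_zero]
    exact squeeze_zero (fun _ => dist_nonneg) hW1 tendsto_one_div_add_atTop_nhds_zero_nat
  obtain ⟨U, hU, hU2⟩ := hdense u ha
  obtain ⟨V, hV, hV2⟩ := hdense v hb
  obtain ⟨R1, hR1⟩ := hU.norm.bddAbove_range
  obtain ⟨R2, hR2⟩ := hV.norm.bddAbove_range
  have hbl := brezis_lieb_L2 ha hb (R := max R1 R2)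
    (fun n => (hR1 ⟨n, rfl⟩).trans (le_max_left _ _))
    (fun n => (hR2 ⟨n, rfl⟩).trans (le_max_right _ _))
    (fun h => tendsto_const_nhds.inner hU) (fun h => tendsto_const_nhds.inner hV)
  have hz : Tendsto (fun n => Jf a b (U n - u) (V n - v)) atTop (𝓝 0) := by
    have h1 : Tendsto (fun n => ‖U n - u‖) atTop (𝓝 0) := by
      simpa using (hU.sub_const u).norm
    have h2 : Tendsto (fun n => ‖V n - v‖) atTop (𝓝 0) := by
      simpa using (hV.sub_const v).norm
    refine squeeze_zero_norm (fun n => Jf_bound ha hb _ _) ?_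
    have := (h2.const_mul (Real.sqrt (1 / (2 * b)))).mul ((h1.pow 2).const_mul (1 / a ^ 2))
    simpa using this
  have hJ : Tendsto (fun n => Jf a b (U n) (V n)) atTop (𝓝 (Jf a b u v)) := by
    simpa using hbl.add hz
  refine le_of_tendsto_of_tendsto' ((hJ.pow 2).const_mul _)
    ((((hU.norm.pow 2).add (hV.norm.pow 2)).pow 3).const_mul _) fun n => ?_
  have := class_bound (a := a) (b := b) hlam (hU2 n).1 (hV2 n).1
  rwa [Ifun_eq (hU2 n).1 (hV2 n).1, (hU2 n).2, (hV2 n).2] at this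

/-! ### Weak compactness and competitors -/

lemma weak_compact {U : ℕ → L2R} {R : ℝ} (hU : ∀ n, ‖U n‖ ≤ R) :
    ∃ (u : L2R) (φ : ℕ → ℕ), StrictMono φ ∧
      ∀ h : L2R, Tendsto (fun n => inner ℝ h (U (φ n))) atTop (𝓝 (inner ℝ h u)) := by
  have : Fact ((2 : ENNReal) ≠ ⊤) := ⟨by simp⟩
  let x : ℕ → WeakDual ℝ L2R :=
    fun n => StrongDual.toWeakDual (InnerProductSpace.toDual ℝ L2R (U n))
  have hx : ∀ n, x n ∈ WeakDual.toStrongDual ⁻¹' Metric.closedBall (0 : StrongDual ℝ L2R) R := by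
    intro n
    rw [Set.mem_preimage, mem_closedBall_zero_iff]
    exact (LinearIsometryEquiv.norm_map (InnerProductSpace.toDual ℝ L2R) (U n)).trans_le (hU n)
  obtain ⟨y, -, φ, hφ, hy⟩ := WeakDual.isSeqCompact_closedBall ℝ L2R 0 R hx
  refine ⟨(InnerProductSpace.toDual ℝ L2R).symm (WeakDual.toStrongDual y), φ, hφ, fun h => ?_⟩
  have h1 : Tendsto (fun n => (x (φ n)) h) atTop (𝓝 (y h)) :=
    ((WeakDual.eval_continuous h).tendsto y).comp hy
  have e : inner ℝ h ((InnerProductSpace.toDual ℝ L2R).symm (WeakDual.toStrongDual y)) = y h := by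
    rw [real_inner_comm, InnerProductSpace.toDual_symm_apply]; rfl
  rw [e]
  refine h1.congr fun n => ?_
  rw [real_inner_comm]
  exact InnerProductSpace.toDual_apply_apply ..

lemma InH1.shift {f : ℝ → ℝ} (hf : InH1 f) (c : ℝ) : InH1 (fun x => f (x + c)) := by
  refine ⟨fun x => ?_, hf.2.1.comp_add_right c, ?_⟩
  · exact (hf.1 (x + c)).comp x (differentiableAt_id.add_const c)
  · simp_rw [deriv_comp_add_const]
    exact hf.2.2.comp_add_right c

lemma gauss_inH1 : InH1 (fun x => Real.exp (-x ^ 2)) := by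
  have hd : ∀ x : ℝ, HasDerivAt (fun x => Real.exp (-x ^ 2)) (Real.exp (-x ^ 2) * (-(2 * x))) x := by
    intro x
    have := ((hasDerivAt_pow 2 x).neg).exp
    refine this.congr_deriv ?_
    simp
  refine ⟨fun x => (hd x).differentiableAt, ?_, ?_⟩
  · refine (integrable_exp_neg_mul_sq (b := 2) (by norm_num)).congr (ae_of_all _ fun x => ?_)
    beta_reduce
    rw [← Real.exp_nat_mul]; congr 1; push_cast; ring
  · have := (integrable_rpow_mul_exp_neg_mul_sq (b := 2) (by norm_num) (s := 2)
      (by norm_num)).const_mul 4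
    refine this.congr (ae_of_all _ fun x => ?_)
    beta_reduce
    rw [(hd x).deriv, mul_pow, ← Real.exp_nat_mul, Real.rpow_two,
      show ((2 : ℕ) : ℝ) * -x ^ 2 = -2 * x ^ 2 by push_cast; ring]
    ring

lemma IvalSet_nonempty {α₀ β₀ lam : ℝ} (hlam : 0 < lam) : (IvalSet α₀ β₀ lam).Nonempty := by
  let f : ℝ → ℝ := fun x => Real.exp (-x ^ 2)
  have hJ : ∫ x, f x ^ 2 * f x ≠ 0 := by
    have : ∀ x, f x ^ 2 * f x = Real.exp (-3 * x ^ 2) := by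
      intro x
      simp only [f]
      rw [← pow_succ, ← Real.exp_nat_mul]; congr 1; push_cast; ring
    simp_rw [this]
    rw [integral_gaussian]
    positivity
  obtain ⟨t, s, hts, -⟩ := exists_scale hlam hJ
  exact ⟨_, _, _, gauss_inH1.smul t, gauss_inH1.smul s, (scale_int f f t s).trans hts, rfl⟩

/-! ### Existence of a minimizer in `L² × L²` -/

/-- A competitor can be translated so that its second component is bounded below at the origin;
this rules out vanishing of minimizing sequences. -/
lemma exists_translate {a b lam m B : ℝ} (ha : 0 < a) (hb : 0 < b) (hlam : 0 < lam)
    (hm : m ∈ IvalSet (a ^ 2) (b ^ 2) lam) (hmB : m ≤ B) :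
    ∃ u v : L2R, Jf a b u v = lam ∧ ‖u‖ ^ 2 + ‖v‖ ^ 2 = m ∧
      lam * a ^ 2 / (2 * (B + 1)) ≤ |op b v 0| := by
  obtain ⟨f, g, hf, hg, hJ, hI⟩ := hm
  have hB : 0 ≤ B := (Ifun_nonneg f g).trans (hI.trans_le hmB)
  set δ := lam * a ^ 2 / (2 * (B + 1)) with hδ
  have hδ0 : 0 < δ := by positivity
  obtain ⟨x₀, hx₀⟩ : ∃ x₀, δ ≤ |g x₀| := by
    by_contra! hcon
    have hf2 : a ^ 2 * ∫ x, f x ^ 2 ≤ B := by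
      refine le_trans ?_ (hI.trans_le hmB)
      rw [← integral_const_mul]
      refine integral_mono (hf.2.1.const_mul _) ?_ fun x => ?_
      · exact ((hf.2.2.add hg.2.2).add (hf.2.1.const_mul _)).add (hg.2.1.const_mul _)
      · have : 0 ≤ deriv f x ^ 2 + deriv g x ^ 2 + b ^ 2 * g x ^ 2 := by positivity
        beta_reduce
        linarith
    have h1 : lam ≤ ∫ x, δ * f x ^ 2 := by
      rw [← hJ]
      refine (le_abs_self _).trans ?_
      rw [← Real.norm_eq_abs]
      refine norm_integral_le_of_norm_le (hf.2.1.const_mul _) (ae_of_all _ fun x => ?_)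
      rw [norm_mul, Real.norm_of_nonneg (sq_nonneg _), mul_comm]
      exact mul_le_mul_of_nonneg_right (hcon x).le (sq_nonneg _)
    rw [integral_const_mul] at h1
    have h2 : δ * ∫ x, f x ^ 2 = lam / (2 * (B + 1)) * (a ^ 2 * ∫ x, f x ^ 2) := by
      rw [hδ]; ring
    have h3 : lam ≤ lam / (2 * (B + 1)) * B := by
      rw [h2] at h1
      exact h1.trans (by gcongr)
    rw [div_mul_eq_mul_div, le_div_iff₀ (by positivity)] at h3
    nlinarith
  obtain ⟨u, hu1, hu2, -⟩ := exists_op ha (hf.shift x₀)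
  obtain ⟨v, hv1, hv2, -⟩ := exists_op hb (hg.shift x₀)
  refine ⟨u, v, ?_, ?_, ?_⟩
  · rw [Jf, ← hJ]
    simp_rw [hu1, hv1]
    exact integral_add_right_eq_self (fun x => f x ^ 2 * g x) x₀
  · rw [hu2, hv2, ← hI, Ifun_eq hf hg]
    simp_rw [deriv_comp_add_const]
    rw [integral_add_right_eq_self (fun x => deriv f x ^ 2 + a ^ 2 * f x ^ 2) x₀,
      integral_add_right_eq_self (fun x => deriv g x ^ 2 + b ^ 2 * g x ^ 2) x₀]
  · rw [hv1]; simpa using hx₀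

/-- Strict subadditivity: with `θ = m / M` and `j = J / lam`, the hypotheses read
`(1 - j)² ≤ (1 - θ)³` and `j² ≤ θ³`, which for `θ > 0` forces `θ = j = 1`. -/
lemma splitting_arith {M lam m J : ℝ} (hM : 0 < M) (hlam : 0 < lam) (hm : 0 < m) (hmM : m ≤ M)
    (h1 : M ^ 3 * (lam - J) ^ 2 ≤ lam ^ 2 * (M - m) ^ 3) (h2 : M ^ 3 * J ^ 2 ≤ lam ^ 2 * m ^ 3) :
    m = M ∧ J = lam := by
  obtain ⟨θ, rfl⟩ : ∃ θ, m = θ * M := ⟨m / M, by field_simp⟩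
  obtain ⟨j, rfl⟩ : ∃ j, J = j * lam := ⟨J / lam, by field_simp⟩
  have hθ : 0 < θ := pos_of_mul_pos_left hm hM.le
  have hθ1 : θ ≤ 1 := by
    by_contra! h
    nlinarith
  have hp : 0 < M ^ 3 * lam ^ 2 := by positivity
  have h1' : (1 - j) ^ 2 ≤ (1 - θ) ^ 3 := by
    refine le_of_mul_le_mul_left ?_ hp
    calc _ = M ^ 3 * (lam - j * lam) ^ 2 := by ring
      _ ≤ _ := h1
      _ = _ := by ring
  have h2' : j ^ 2 ≤ θ ^ 3 := by
    refine le_of_mul_le_mul_left ?_ hp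
    calc _ = M ^ 3 * (j * lam) ^ 2 := by ring
      _ ≤ _ := h2
      _ = _ := by ring
  have h3 : 1 - j ≤ 1 - θ := by
    refine le_of_sq_le_sq ?_ (by linarith) 
    refine h1'.trans ?_
    nlinarith [mul_nonneg (sq_nonneg (1 - θ)) hθ.le]
  have h4 : θ ^ 2 ≤ θ ^ 3 := le_trans (by nlinarith) h2'
  have h5 : θ = 1 := by
    refine le_antisymm hθ1 ?_
    by_contra! h
    nlinarith [mul_pos (sq_pos_of_pos hθ) (sub_pos.2 h)]
  subst h5
  have h6 : (1 - j) ^ 2 ≤ 0 := by simpa using h1'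
  have h7 : 1 - j = 0 := by nlinarith [pow_eq_zero_iff (two_ne_zero) |>.1 (le_antisymm h6 (sq_nonneg _))]
  exact ⟨by ring, by rw [show j = 1 by linarith]; ring⟩

lemma exists_L2_minimizer {a b lam : ℝ} (ha : 0 < a) (hb : 0 < b) (hlam : 0 < lam) :
    ∃ u v : L2R, Jf a b u v = lam ∧ ‖u‖ ^ 2 + ‖v‖ ^ 2 = Mfun (a ^ 2) (b ^ 2) lam ∧
      0 < Mfun (a ^ 2) (b ^ 2) lam := by
  have hbdd : BddBelow (IvalSet (a ^ 2) (b ^ 2) lam) := by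
    refine ⟨0, ?_⟩
    rintro m ⟨f, g, -, -, -, rfl⟩
    exact Ifun_nonneg f g
  obtain ⟨m, hma, hml, hmS⟩ := exists_seq_tendsto_sInf (IvalSet_nonempty hlam) hbdd
  change Tendsto m atTop (𝓝 (Mfun (a ^ 2) (b ^ 2) lam)) at hml
  set M := Mfun (a ^ 2) (b ^ 2) lam with hMdef
  choose U V hJ hN hδ using fun n => exists_translate ha hb hlam (hmS n) (hma (Nat.zero_le n))
  have hm0 : 0 ≤ m 0 := by rw [← hN 0]; positivity
  have hnU : ∀ n, ‖U n‖ ≤ Real.sqrt (m 0) := fun n => by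
    refine Real.le_sqrt_of_sq_le ?_
    have := hN n
    have := hma (Nat.zero_le n)
    nlinarith [sq_nonneg ‖V n‖]
  have hnV : ∀ n, ‖V n‖ ≤ Real.sqrt (m 0) := fun n => by
    refine Real.le_sqrt_of_sq_le ?_
    have := hN n
    have := hma (Nat.zero_le n)
    nlinarith [sq_nonneg ‖U n‖]
  -- positivity of `M`: the cubic form is bounded by a multiple of the cube of the norm
  have hMpos : 0 < M := by
    refine lt_of_le_of_ne Mfun_nonneg fun h0 => ?_
    have hUz : Tendsto (fun n => ‖U n‖ ^ 2) atTop (𝓝 0) := by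
      refine squeeze_zero (fun n => sq_nonneg _) (fun n => ?_) (h0 ▸ hml)
      rw [← hN n]; nlinarith [sq_nonneg ‖V n‖]
    have hz : Tendsto (fun n => Real.sqrt (1 / (2 * b)) * Real.sqrt (m 0) *
        (1 / a ^ 2 * ‖U n‖ ^ 2)) atTop (𝓝 0) := by
      have h1 := (hUz.const_mul (1 / a ^ 2)).const_mul
        (Real.sqrt (1 / (2 * b)) * Real.sqrt (m 0))
      rw [mul_zero, mul_zero] at h1
      exact h1
    have : lam ≤ 0 := by
      refine ge_of_tendsto' hz fun n => ?_
      have h1 := Jf_bound ha hb (U n) (V n)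
      rw [hJ n, abs_of_pos hlam] at h1
      refine h1.trans ?_
      gcongr
      exact hnV n
    linarith
  obtain ⟨u, φ, hφ, hu⟩ := weak_compact hnU
  obtain ⟨v, ψ, hψ, hv⟩ := weak_compact (fun n => hnV (φ n))
  have hu' : ∀ h : L2R, Tendsto (fun n => inner ℝ h (U (φ (ψ n)))) atTop (𝓝 (inner ℝ h u)) :=
    fun h => (hu h).comp hψ.tendsto_atTop
  have hml' : Tendsto (fun n => m (φ (ψ n))) atTop (𝓝 M) :=
    hml.comp (hφ.tendsto_atTop.comp hψ.tendsto_atTop)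
  have hbl := brezis_lieb_L2 ha hb (fun n => hnU (φ (ψ n))) (fun n => hnV (φ (ψ n))) hu' hv
  simp_rw [hJ] at hbl
  set D : ℕ → ℝ := fun n => ‖U (φ (ψ n)) - u‖ ^ 2 + ‖V (φ (ψ n)) - v‖ ^ 2 with hD
  have hDl : Tendsto D atTop (𝓝 (M - (‖u‖ ^ 2 + ‖v‖ ^ 2))) := by
    have h1 : ∀ n, D n = m (φ (ψ n)) - 2 * inner ℝ u (U (φ (ψ n))) - 2 * inner ℝ v (V (φ (ψ n)))
        + (‖u‖ ^ 2 + ‖v‖ ^ 2) := by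
      intro n
      simp only [hD]
      rw [norm_sub_sq_real, norm_sub_sq_real, ← hN, real_inner_comm u, real_inner_comm v]
      ring
    have h2 := ((hml'.sub ((hu' u).const_mul 2)).sub ((hv v).const_mul 2)).add_const
      (‖u‖ ^ 2 + ‖v‖ ^ 2)
    simp_rw [real_inner_self_eq_norm_sq] at h2
    rw [funext h1]
    convert h2 using 2
    ring
  have hmM : ‖u‖ ^ 2 + ‖v‖ ^ 2 ≤ M := by
    have : 0 ≤ M - (‖u‖ ^ 2 + ‖v‖ ^ 2) := ge_of_tendsto' hDl fun n => by positivity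
    linarith
  -- non-vanishing: the pointwise lower bound at the origin survives in the weak limit
  have hvne : v ≠ 0 := by
    rintro rfl
    have h1 : Tendsto (fun n => |op b (V (φ (ψ n))) 0|) atTop (𝓝 0) := by
      simpa [op] using (hv (kerL b 0)).abs
    have h2 : lam * a ^ 2 / (2 * (m 0 + 1)) ≤ 0 := ge_of_tendsto' h1 fun n => hδ _
    have : 0 < lam * a ^ 2 / (2 * (m 0 + 1)) := by positivity
    linarith
  have hmpos : 0 < ‖u‖ ^ 2 + ‖v‖ ^ 2 := by
    have : 0 < ‖v‖ := norm_pos_iff.2 hvne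
    positivity
  have hJl : Tendsto (fun n => Jf a b (U (φ (ψ n)) - u) (V (φ (ψ n)) - v)) atTop
      (𝓝 (lam - Jf a b u v)) := by
    simpa using hbl.const_sub lam
  have hlim := le_of_tendsto_of_tendsto' ((hJl.pow 2).const_mul (M ^ 3))
    ((hDl.pow 3).const_mul (lam ^ 2)) fun n => L2_bound ha hb hlam _ _
  obtain ⟨h1, h2⟩ := splitting_arith hMpos hlam hmpos hmM hlim (L2_bound ha hb hlam u v)
  exact ⟨u, v, h2, h1, hMpos⟩

/-! ### First variation and conclusion -/

/-- First-order condition at `t = 0` for `lam² N(t)³ - M³ J(t)² ≥ 0`, with equality at `0`. -/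
lemma first_order {M lam n1 n2 j1 j2 : ℝ} (hM : 0 < M) (hlam : 0 < lam)
    (h : ∀ t : ℝ, M ^ 3 * (lam + t * j1 + t ^ 2 * j2) ^ 2
      ≤ lam ^ 2 * (M + 2 * t * n1 + t ^ 2 * n2) ^ 3) :
    3 * lam * (2 * n1) = 2 * M * j1 := by
  let F : ℝ → ℝ := fun t => lam ^ 2 * (M + 2 * t * n1 + t ^ 2 * n2) ^ 3
    - M ^ 3 * (lam + t * j1 + t ^ 2 * j2) ^ 2
  have hmin : IsLocalMin F 0 := by
    refine Eventually.of_forall fun t => ?_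
    have e : F 0 = 0 := by simp only [F]; ring
    rw [e]
    exact sub_nonneg.2 (h t)
  have hid := hasDerivAt_id (0:ℝ)
  have hN : HasDerivAt (fun t : ℝ => M + 2 * t * n1 + t ^ 2 * n2) (2 * n1) 0 := by
    have h1 := ((hid.const_mul 2).mul_const n1).const_add M
    have h2 := h1.add ((hasDerivAt_pow 2 (0:ℝ)).mul_const n2)
    exact h2.congr_deriv (by simp)
  have hJ : HasDerivAt (fun t : ℝ => lam + t * j1 + t ^ 2 * j2) j1 0 := by
    have h1 := (hid.mul_const j1).const_add lam
    have h2 := h1.add ((hasDerivAt_pow 2 (0:ℝ)).mul_const j2)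
    exact h2.congr_deriv (by simp)
  have hF := ((hN.pow 3).const_mul (lam ^ 2)).sub ((hJ.pow 2).const_mul (M ^ 3))
  have h0 := hmin.hasDerivAt_eq_zero hF
  simp only [Nat.cast_ofNat] at h0
  have hne : lam * M ^ 2 ≠ 0 := by positivity
  refine mul_left_cancel₀ hne ?_
  linear_combination h0

/-- the set `S_λ` of minimizers is non-empty. -/
theorem minimizer_exists (α₀ β₀ lam : ℝ) (hα : 0 < α₀) (hβ : 0 < β₀) (hlam : 0 < lam) :
    ∃ φ ψ : ℝ → ℝ, InH1 φ ∧ InH1 ψ ∧ (∫ x : ℝ, φ x ^ 2 * ψ x) = lam ∧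
      Ifun α₀ β₀ φ ψ = Mfun α₀ β₀ lam := by
  obtain ⟨a, ha, rfl⟩ : ∃ a : ℝ, 0 < a ∧ α₀ = a ^ 2 :=
    ⟨Real.sqrt α₀, Real.sqrt_pos.2 hα, (Real.sq_sqrt hα.le).symm⟩
  obtain ⟨b, hb, rfl⟩ : ∃ b : ℝ, 0 < b ∧ β₀ = b ^ 2 :=
    ⟨Real.sqrt β₀, Real.sqrt_pos.2 hβ, (Real.sq_sqrt hβ.le).symm⟩
  obtain ⟨u, v, hJ, hN, hM⟩ := exists_L2_minimizer ha hb hlam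
  set M := Mfun (a ^ 2) (b ^ 2) lam with hMdef
  have hf := op_good ha u
  have hg := op_good hb v
  have hEu : ∀ h : L2R, inner ℝ u h
      = (2 * M / (3 * lam)) * ∫ y, (op a u y * op b v y) * op a h y := by
    intro h
    have hh := op_good ha h
    have key := first_order (n1 := inner ℝ u h) (n2 := ‖h‖ ^ 2)
      (j1 := 2 * ∫ y, (op a u y * op b v y) * op a h y)
      (j2 := ∫ y, (op a h y * op a h y) * op b v y) hM hlam (fun t => by
        have hb' := L2_bound ha hb hlam (u + t • h) v
        have e1 : ‖u + t • h‖ ^ 2 + ‖v‖ ^ 2 = M + 2 * t * inner ℝ u h + t ^ 2 * ‖h‖ ^ 2 := by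
          rw [norm_add_sq_real, real_inner_smul_right, norm_smul, mul_pow, Real.norm_eq_abs,
            sq_abs, ← hN]
          ring
        have e2 : Jf a b (u + t • h) v = lam + t * (2 * ∫ y, (op a u y * op b v y) * op a h y)
            + t ^ 2 * ∫ y, (op a h y * op a h y) * op b v y := by
          have i0 : Integrable (fun y => op a u y ^ 2 * op b v y) := by
            simpa only [sq] using (hf.mul hf).int hg
          have i1 := ((hf.mul hg).int hh).const_mul (t * 2)
          have i2 := ((hh.mul hh).int hg).const_mul (t ^ 2)
          rw [← hJ, Jf, Jf, ← mul_assoc, ← integral_const_mul, ← integral_const_mul,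
            ← integral_add i0 i1, ← integral_add (by exact i0.add i1) i2]
          congr 1; funext y
          rw [op_add, op_smul]; ring
        rwa [e1, e2] at hb')
    field_simp
    linarith
  have hEv : ∀ h : L2R, inner ℝ v h
      = (M / (3 * lam)) * ∫ y, (op a u y * op a u y) * op b h y := by
    intro h
    have hh := op_good hb h
    have key := first_order (n1 := inner ℝ v h) (n2 := ‖h‖ ^ 2)
      (j1 := ∫ y, (op a u y * op a u y) * op b h y) (j2 := 0) hM hlam (fun t => by
        have hb' := L2_bound ha hb hlam u (v + t • h)
        have e1 : ‖u‖ ^ 2 + ‖v + t • h‖ ^ 2 = M + 2 * t * inner ℝ v h + t ^ 2 * ‖h‖ ^ 2 := by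
          rw [norm_add_sq_real, real_inner_smul_right, norm_smul, mul_pow, Real.norm_eq_abs,
            sq_abs, ← hN]
          ring
        have e2 : Jf a b u (v + t • h) = lam + t * (∫ y, (op a u y * op a u y) * op b h y)
            + t ^ 2 * 0 := by
          have i0 : Integrable (fun y => op a u y ^ 2 * op b v y) := by
            simpa only [sq] using (hf.mul hf).int hg
          have i1 := ((hf.mul hf).int hh).const_mul t
          rw [← hJ, Jf, Jf, ← integral_const_mul, ← integral_add i0 i1, mul_zero, add_zero]
          congr 1; funext y
          rw [op_add, op_smul]; ring
        rwa [e1, e2] at hb')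
    rw [div_mul_eq_mul_div, eq_div_iff (by positivity)]
    linarith
  obtain ⟨hu1, hu2⟩ := regularity ha u _ (hf.mul hg) (hf.int hg) hEu
  obtain ⟨hv1, hv2⟩ := regularity hb v _ (hf.mul hf) (hf.int hf) hEv
  refine ⟨op a u, op b v, hu1, hv1, hJ, ?_⟩
  rw [Ifun_eq hu1 hv1, hu2, hv2, hN]
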